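/- For p = (p₁,p₂) ∈ ℝ² with p ≠ 0, set R̃(p) = M · R(p) · M, where M = (1/√2)·[[1,1,0],[1,−1,0],[0,0,√2]] and R(p) = (1/|p|)·[[|p|, 0, 0],[0, −p₁, −p₂],[0, p₂, −p₁]]. Then for every q ∈ ℝ² and every τ ∈ ℝ: R̃(p) · [ (τ + |p|²/2)·I + V_PJT(q₁,q₂) ] · R̃(p)ᵀ = (τ + |p|²/2)·I + V_PJT(−(p·q)/|p|, −(p∧q)/|p|), where p·q = p₁q₁ + p₂q₂ and p∧q = p₁q₂ − p₂q₁. In particular the conjugated matrix equals (τ + |p|²/2)·I − V_PJT((p·q)/|p|, (p∧q)/|p|). -/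

import Mathlib

open Matrix

/-- The pseudo Jahn–Teller potential: the real symmetric 3×3 matrix with rows
`(a, 0, b/√2)`, `(0, −a, b/√2)`, `(b/√2, b/√2, 0)`. -/
noncomputable def VPJT (a b : ℝ) : Matrix (Fin 3) (Fin 3) ℝ :=
  !![a, 0, b / Real.sqrt 2;
     0, -a, b / Real.sqrt 2;
     b / Real.sqrt 2, b / Real.sqrt 2, 0]

/-- The matrix `M = (1/√2)·[[1,1,0],[1,−1,0],[0,0,√2]]`. -/
noncomputable def Mmat : Matrix (Fin 3) (Fin 3) ℝ :=
  (1 / Real.sqrt 2) • !![1, 1, 0; 1, -1, 0; 0, 0, Real.sqrt 2]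

/-- `R(p) = (1/|p|)·[[|p|, 0, 0],[0, −p₁, −p₂],[0, p₂, −p₁]]`. -/
noncomputable def Rmat (p₁ p₂ : ℝ) : Matrix (Fin 3) (Fin 3) ℝ :=
  (1 / Real.sqrt (p₁ ^ 2 + p₂ ^ 2)) •
    !![Real.sqrt (p₁ ^ 2 + p₂ ^ 2), 0, 0; 0, -p₁, -p₂; 0, p₂, -p₁]

/-- `R̃(p) = M · R(p) · M`. -/
noncomputable def Rtilde (p₁ p₂ : ℝ) : Matrix (Fin 3) (Fin 3) ℝ :=
  Mmat * Rmat p₁ p₂ * Mmat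

/-- `V_PJT` in the basis given by `Mmat`. -/
def Wmat (a b : ℝ) : Matrix (Fin 3) (Fin 3) ℝ :=
  !![0, a, b; a, 0, 0; b, 0, 0]

lemma Mmat_mul_self : Mmat * Mmat = 1 := by
  have h2 : Real.sqrt 2 ^ 2 = 2 := Real.sq_sqrt (by norm_num)
  have h0 : Real.sqrt 2 ≠ 0 := by positivity
  unfold Mmat
  generalize Real.sqrt 2 = s at *
  ext i j
  fin_cases i <;> fin_cases j <;>
    simp [Matrix.mul_apply, Fin.sum_univ_three] <;> field_simp <;> linarith

lemma Mmat_transpose : Mmatᵀ = Mmat := by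
  ext i j
  fin_cases i <;> fin_cases j <;> simp [Mmat]

lemma VPJT_eq (a b : ℝ) : VPJT a b = Mmat * Wmat a b * Mmat := by
  have h2 : Real.sqrt 2 ^ 2 = 2 := Real.sq_sqrt (by norm_num)
  have h0 : Real.sqrt 2 ≠ 0 := by positivity
  unfold Mmat VPJT Wmat
  generalize Real.sqrt 2 = s at *
  ext i j
  fin_cases i <;> fin_cases j <;>
    simp [Matrix.mul_apply, Fin.sum_univ_three] <;> field_simp <;>
    first | done | (simp only [h2]; ring)

lemma Rmat_facts (p₁ p₂ : ℝ) (hp : (p₁, p₂) ≠ (0, 0)) (a b : ℝ) :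
    Rmat p₁ p₂ * (Rmat p₁ p₂)ᵀ = 1 ∧
    Rmat p₁ p₂ * Wmat a b * (Rmat p₁ p₂)ᵀ =
      Wmat (-((p₁ * a + p₂ * b) / Real.sqrt (p₁ ^ 2 + p₂ ^ 2)))
        (-((p₁ * b - p₂ * a) / Real.sqrt (p₁ ^ 2 + p₂ ^ 2))) := by
  have hpos : 0 < p₁ ^ 2 + p₂ ^ 2 := by
    by_contra h
    apply hp
    have h1 : p₁ = 0 := by nlinarith [sq_nonneg p₁, sq_nonneg p₂]
    have h2 : p₂ = 0 := by nlinarith [sq_nonneg p₁, sq_nonneg p₂]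
    rw [h1, h2]
  have h2 : Real.sqrt (p₁ ^ 2 + p₂ ^ 2) ^ 2 = p₁ ^ 2 + p₂ ^ 2 := Real.sq_sqrt hpos.le
  have h0 : Real.sqrt (p₁ ^ 2 + p₂ ^ 2) ≠ 0 := (Real.sqrt_pos.2 hpos).ne'
  unfold Rmat Wmat
  generalize Real.sqrt (p₁ ^ 2 + p₂ ^ 2) = r at *
  constructor <;> ext i j <;> fin_cases i <;> fin_cases j <;>
    simp [Matrix.mul_apply, Fin.sum_univ_three, h0] <;> field_simp <;>
    first | done | (ring; done) | linarith

/-- For `p ≠ 0`, conjugation by `R̃(p)` turns `(τ + |p|²/2)·I + V_PJT(q)` into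
`(τ + |p|²/2)·I + V_PJT(−(p·q)/|p|, −(p∧q)/|p|)`, which equals
`(τ + |p|²/2)·I − V_PJT((p·q)/|p|, (p∧q)/|p|)`. -/
theorem Rtilde_conj_VPJT (p₁ p₂ : ℝ) (hp : (p₁, p₂) ≠ (0, 0)) (q₁ q₂ τ : ℝ) :
    Rtilde p₁ p₂ * ((τ + (p₁ ^ 2 + p₂ ^ 2) / 2) • (1 : Matrix (Fin 3) (Fin 3) ℝ)
        + VPJT q₁ q₂) * (Rtilde p₁ p₂)ᵀ =
      (τ + (p₁ ^ 2 + p₂ ^ 2) / 2) • (1 : Matrix (Fin 3) (Fin 3) ℝ)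
        + VPJT (-((p₁ * q₁ + p₂ * q₂) / Real.sqrt (p₁ ^ 2 + p₂ ^ 2)))
            (-((p₁ * q₂ - p₂ * q₁) / Real.sqrt (p₁ ^ 2 + p₂ ^ 2))) ∧
    Rtilde p₁ p₂ * ((τ + (p₁ ^ 2 + p₂ ^ 2) / 2) • (1 : Matrix (Fin 3) (Fin 3) ℝ)
        + VPJT q₁ q₂) * (Rtilde p₁ p₂)ᵀ =
      (τ + (p₁ ^ 2 + p₂ ^ 2) / 2) • (1 : Matrix (Fin 3) (Fin 3) ℝ)
        - VPJT ((p₁ * q₁ + p₂ * q₂) / Real.sqrt (p₁ ^ 2 + p₂ ^ 2))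
            ((p₁ * q₂ - p₂ * q₁) / Real.sqrt (p₁ ^ 2 + p₂ ^ 2)) := by
  have hV : ∀ a b : ℝ, VPJT (-a) (-b) = -VPJT a b := by
    intro a b
    ext i j
    fin_cases i <;> fin_cases j <;> simp [VPJT, neg_div]
  have key : Rtilde p₁ p₂ * ((τ + (p₁ ^ 2 + p₂ ^ 2) / 2) • (1 : Matrix (Fin 3) (Fin 3) ℝ)
        + VPJT q₁ q₂) * (Rtilde p₁ p₂)ᵀ =
      (τ + (p₁ ^ 2 + p₂ ^ 2) / 2) • (1 : Matrix (Fin 3) (Fin 3) ℝ)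
        + VPJT (-((p₁ * q₁ + p₂ * q₂) / Real.sqrt (p₁ ^ 2 + p₂ ^ 2)))
            (-((p₁ * q₂ - p₂ * q₁) / Real.sqrt (p₁ ^ 2 + p₂ ^ 2))) := by
    obtain ⟨hR, hW⟩ := Rmat_facts p₁ p₂ hp q₁ q₂
    have hM : ∀ X : Matrix (Fin 3) (Fin 3) ℝ, Mmat * (Mmat * X) = X := by
      intro X
      rw [← Matrix.mul_assoc, Mmat_mul_self, Matrix.one_mul]
    have hR' : ∀ X : Matrix (Fin 3) (Fin 3) ℝ,
        Rmat p₁ p₂ * ((Rmat p₁ p₂)ᵀ * X) = X := by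
      intro X
      rw [← Matrix.mul_assoc, hR, Matrix.one_mul]
    rw [VPJT_eq, VPJT_eq, ← hW, Rtilde, Matrix.transpose_mul, Matrix.transpose_mul,
      Mmat_transpose, Matrix.mul_add, Matrix.add_mul]
    congr 1
    · rw [Matrix.mul_smul, Matrix.smul_mul, Matrix.mul_one]
      simp only [Matrix.mul_assoc, hM, hR', Mmat_mul_self]
    · simp only [Matrix.mul_assoc, hM]
  refine ⟨key, ?_⟩
  rw [key, hV, ← sub_eq_add_neg]
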